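/- Let $A > 1$, $\delta_0 > 0$, and $(1+A)/(2A) < \lambda < 1$. Then the planar system $\dot{y} = \mu - y - A|1-y|y$, $\dot{\mu} = \delta_0(\lambda - y)$ admits a nonconstant periodic solution: there exist $T > 0$ and a nonconstant differentiable function $\gamma : \mathbb{R} \to \mathbb{R}^2$ with $\gamma'(t) = (\gamma_2(t) - \gamma_1(t) - A|1 - \gamma_1(t)|\gamma_1(t), \; \delta_0(\lambda - \gamma_1(t)))$ and $\gamma(t + T) = \gamma(t)$ for all $t \in \mathbb{R}$. -/

import Mathlib

open Set Filter Topology NNReal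

lemma flow_curve {E : Type*} [NormedAddCommGroup E] [NormedSpace ℝ E] [CompleteSpace E]
    (v : E → E) (K L : ℝ≥0) (hK : LipschitzWith K v) (hL : ∀ x, ‖v x‖ ≤ L) (p : E) :
    ∃ α : ℝ → E, α 0 = p ∧ ∀ t, HasDerivAt α (v (α t)) t := by
  have h1 : ∀ n : ℕ, ∃ α : ℝ → E, α 0 = p ∧
      ∀ t ∈ Ioo (-((n : ℝ) + 1)) ((n : ℝ) + 1), HasDerivAt α (v (α t)) t := by
    intro n
    have hn : (0 : ℝ) ∈ Icc (-((n : ℝ) + 1)) ((n : ℝ) + 1) := by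
      constructor <;> linarith [(Nat.cast_nonneg n : (0 : ℝ) ≤ n)]
    have hpl : IsPicardLindelof (fun _ : ℝ => v) (⟨0, hn⟩ : Icc (-((n : ℝ) + 1)) ((n : ℝ) + 1)) p
        (L * ((n : ℝ≥0) + 1)) 0 L K := by
      refine ⟨fun t _ => hK.lipschitzOnWith, fun x _ => continuousOn_const, fun t _ x _ => hL x, ?_⟩
      simp
    obtain ⟨α, h0, hα⟩ := hpl.exists_eq_forall_mem_Icc_hasDerivWithinAt₀
    exact ⟨α, h0, fun t ht => (hα t (Ioo_subset_Icc_self ht)).hasDerivAt (Icc_mem_nhds ht.1 ht.2)⟩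
  choose α h0 hα using h1
  have hagree : ∀ n m : ℕ, n ≤ m → ∀ t ∈ Ioo (-((n : ℝ) + 1)) ((n : ℝ) + 1), α n t = α m t := by
    intro n m hnm t ht
    have hnm' : (n : ℝ) ≤ m := by exact_mod_cast hnm
    have hn0 : (0 : ℝ) ≤ n := Nat.cast_nonneg n
    refine ODE_solution_unique_of_mem_Ioo (v := fun _ => v) (s := fun _ => univ) (K := K)
      (t₀ := 0) (a := -((n : ℝ) + 1)) (b := (n : ℝ) + 1)
      (fun t _ => hK.lipschitzOnWith) ?_ ?_ ?_ ?_ ht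
    · constructor <;> linarith
    · exact fun t ht => ⟨hα n t ht, trivial⟩
    · exact fun t ht => ⟨hα m t ⟨by linarith [ht.1], by linarith [ht.2]⟩, trivial⟩
    · rw [h0, h0]
  have hagree' : ∀ n m : ℕ, ∀ t : ℝ, |t| < n + 1 → |t| < m + 1 → α n t = α m t := by
    intro n m t hn hm
    rcases le_total n m with h | h
    · exact hagree n m h t (abs_lt.mp hn)
    · exact (hagree m n h t (abs_lt.mp hm)).symm
  refine ⟨fun t => α ⌈|t|⌉₊ t, h0 _, fun t => ?_⟩
  have hceil : ∀ t : ℝ, |t| < (⌈|t|⌉₊ : ℝ) + 1 := fun t => by linarith [Nat.le_ceil |t|]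
  have hev : (fun t => α ⌈|t|⌉₊ t) =ᶠ[𝓝 t] α ⌈|t|⌉₊ := by
    have : ∀ᶠ u : ℝ in 𝓝 t, |u| < (⌈|t|⌉₊ : ℝ) + 1 :=
      (continuous_abs.tendsto t).eventually (gt_mem_nhds (hceil t))
    filter_upwards [this] with u hu
    exact hagree' _ _ u (hceil u) hu
  exact (hα _ t (abs_lt.mp (hceil t))).congr_of_eventuallyEq hev

lemma flow_dist {E : Type*} [NormedAddCommGroup E] [NormedSpace ℝ E]
    (v : E → E) (K : ℝ≥0) (hK : LipschitzWith K v) (α β : ℝ → E)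
    (hα : ∀ t, HasDerivAt α (v (α t)) t) (hβ : ∀ t, HasDerivAt β (v (β t)) t) (t : ℝ)
    (ht : 0 ≤ t) : dist (α t) (β t) ≤ dist (α 0) (β 0) * Real.exp (K * t) := by
  have := dist_le_of_trajectories_ODE (v := fun _ => v) (K := K) (f := α) (g := β)
    (a := 0) (b := t) (δ := dist (α 0) (β 0)) (fun _ => hK)
    (fun u _ => (hα u).continuousAt.continuousWithinAt)
    (fun u _ => (hα u).hasDerivWithinAt)
    (fun u _ => (hβ u).continuousAt.continuousWithinAt)
    (fun u _ => (hβ u).hasDerivWithinAt) le_rfl t ⟨ht, le_rfl⟩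
  simpa using this

lemma flow_dist_abs {E : Type*} [NormedAddCommGroup E] [NormedSpace ℝ E]
    (v : E → E) (K : ℝ≥0) (hK : LipschitzWith K v) (α β : ℝ → E)
    (hα : ∀ t, HasDerivAt α (v (α t)) t) (hβ : ∀ t, HasDerivAt β (v (β t)) t) (t : ℝ) :
    dist (α t) (β t) ≤ dist (α 0) (β 0) * Real.exp (K * |t|) := by
  rcases le_total 0 t with h | h
  · rw [abs_of_nonneg h]; exact flow_dist v K hK α β hα hβ t h
  · have key : ∀ γ : ℝ → E, (∀ t, HasDerivAt γ (v (γ t)) t) →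
        ∀ t, HasDerivAt (fun u => γ (-u)) ((fun x => - v x) (γ (-t))) t := by
      intro γ hγ t
      have := (hγ (-t)).scomp t (hasDerivAt_neg t)
      simpa [Function.comp_def] using this
    have := flow_dist (fun x => - v x) K hK.neg (fun u => α (-u)) (fun u => β (-u))
      (key α hα) (key β hβ) (-t) (by linarith)
    rw [abs_of_nonpos h]
    simpa using this

lemma flow_exists {E : Type*} [NormedAddCommGroup E] [NormedSpace ℝ E] [CompleteSpace E]
    (v : E → E) (K L : ℝ≥0) (hK : LipschitzWith K v) (hL : ∀ x, ‖v x‖ ≤ L) :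
    ∃ φ : E → ℝ → E, (∀ p, φ p 0 = p) ∧ (∀ p t, HasDerivAt (φ p) (v (φ p t)) t) ∧
      Continuous (fun q : E × ℝ => φ q.1 q.2) ∧
      (∀ p T, φ p T = p → ∀ t, φ p (t + T) = φ p t) := by
  choose φ h0 hφ using flow_curve v K L hK hL
  refine ⟨φ, h0, hφ, ?_, ?_⟩
  · rw [continuous_iff_continuousAt]
    rintro ⟨p, t⟩
    rw [ContinuousAt, tendsto_iff_dist_tendsto_zero]
    have hb : ∀ q : E × ℝ, dist (φ q.1 q.2) (φ p t) ≤
        dist q.1 p * Real.exp (K * |q.2|) + dist (φ p q.2) (φ p t) := by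
      intro q
      have := flow_dist_abs v K hK (φ q.1) (φ p) (hφ _) (hφ _) q.2
      rw [h0, h0] at this
      exact (dist_triangle _ (φ p q.2) _).trans (by linarith)
    have hcont : Continuous (φ p) := continuous_iff_continuousAt.mpr fun t => (hφ p t).continuousAt
    have hlim : Tendsto (fun q : E × ℝ => dist q.1 p * Real.exp (K * |q.2|) +
        dist (φ p q.2) (φ p t)) (𝓝 (p, t)) (𝓝 0) := by
      have : Continuous (fun q : E × ℝ => dist q.1 p * Real.exp (K * |q.2|) +
        dist (φ p q.2) (φ p t)) := by fun_prop
      have h2 := this.tendsto (p, t)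
      simpa using h2
    exact squeeze_zero (fun _ => dist_nonneg) hb hlim
  · intro p T hT t
    have key : ∀ t, HasDerivAt (fun u => φ p (u + T)) (v (φ p (t + T))) t := fun t =>
      (hφ p (t + T)).comp_add_const t T
    have := flow_dist_abs v K hK (fun u => φ p (u + T)) (φ p) key (hφ p) t
    simp only [zero_add, hT, h0, dist_self, zero_mul] at this
    exact dist_le_zero.mp this

/-- barrier lemma -/
lemma barrier (g g' : ℝ → ℝ) (a c : ℝ) (hg : ∀ t, a ≤ t → HasDerivAt g (g' t) t)
    (h0 : g a ≤ c) (h : ∀ t, a ≤ t → g t = c → g' t < 0) : ∀ t, a ≤ t → g t ≤ c := by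
  intro t ht
  exact image_le_of_deriv_right_lt_deriv_boundary' (f := g) (f' := g') (a := a) (b := t)
    (B := fun _ => c) (B' := fun _ => 0)
    (fun u hu => (hg u hu.1).continuousAt.continuousWithinAt)
    (fun u hu => (hg u hu.1).hasDerivWithinAt) h0 continuousOn_const
    (fun u _ => hasDerivWithinAt_const _ _ _) (fun u hu => h u hu.1) ⟨ht, le_rfl⟩

/-- decreasing at a definite rate -/
lemma rate (g g' : ℝ → ℝ) (a κ : ℝ) (hg : ∀ t, a ≤ t → HasDerivAt g (g' t) t)
    (h : ∀ t, a ≤ t → g' t ≤ -κ) : ∀ t, a ≤ t → g t ≤ g a - κ * (t - a) := by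
  intro t ht
  exact image_le_of_deriv_right_le_deriv_boundary (f := g) (f' := g') (a := a) (b := t)
    (B := fun u => g a - κ * (u - a)) (B' := fun _ => -κ)
    (fun u hu => (hg u hu.1).continuousAt.continuousWithinAt)
    (fun u hu => (hg u hu.1).hasDerivWithinAt) (by simp) (by fun_prop)
    (fun u _ => by
      have : HasDerivAt (fun u => g a - κ * (u - a)) (-κ) u := by
        simpa using ((((hasDerivAt_id u).sub_const a).const_mul κ).const_sub (g a))
      exact this.hasDerivWithinAt) (fun u hu => h u hu.1) ⟨ht, le_rfl⟩

lemma rate_unbounded (g g' : ℝ → ℝ) (a κ B : ℝ) (hκ : 0 < κ)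
    (hg : ∀ t, a ≤ t → HasDerivAt g (g' t) t)
    (h : ∀ t, a ≤ t → g' t ≤ -κ) (hB : ∀ t, a ≤ t → |g t| ≤ B) : False := by
  have hB0 : 0 ≤ B := (abs_nonneg _).trans (hB a le_rfl)
  have ht : a ≤ a + (2 * B + 1) / κ := by
    have : 0 ≤ (2 * B + 1) / κ := by positivity
    linarith
  have h1 := rate g g' a κ hg h _ ht
  have h2 := abs_le.mp (hB _ ht)
  have h3 := abs_le.mp (hB a le_rfl)
  have h4 : κ * (a + (2 * B + 1) / κ - a) = 2 * B + 1 := by field_simp; ring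
  linarith [h2.1, h3.2]

/-- the trajectory leaves the open right half plane -/
lemma exists_return (f : ℝ → ℝ) (δ ε B : ℝ) (hδ : 0 < δ) (hε : 0 < ε) (hf : Continuous f)
    (f0 : f 0 = 0) (hneg : ∀ x, 0 < x → x ≤ ε → f x < 0) (X W : ℝ → ℝ)
    (dX : ∀ t, 0 ≤ t → HasDerivAt X (W t - f (X t)) t)
    (dW : ∀ t, 0 ≤ t → HasDerivAt W (-(δ * X t)) t)
    (bd : ∀ t, 0 ≤ t → |X t| ≤ B ∧ |W t| ≤ B) : ∃ t, 0 < t ∧ X t ≤ 0 := by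
  by_contra! hpos
  have hanti : ∀ a, 0 < a → ∀ t, a ≤ t → W t ≤ W a := by
    intro a ha t hat
    have := rate W (fun t => -(δ * X t)) a 0 (fun t ht => dW t (by linarith))
      (fun t ht => by
        have := mul_pos hδ (hpos t (by linarith))
        linarith) t hat
    linarith
  -- `W` becomes negative
  have h1 : ∃ t, 0 < t ∧ W t < 0 := by
    by_contra! hW
    set m := min (X 1) ε with hm
    have hm0 : 0 < m := lt_min (hpos 1 one_pos) hε
    have hX : ∀ t, 1 ≤ t → m ≤ X t := by
      intro t ht
      have := barrier (fun t => - X t) (fun t => -(W t - f (X t))) 1 (-m)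
        (fun t ht => (dX t (by linarith)).neg) (by simp [hm]) (fun t ht h => by
          have hx : X t = m := by simpa using h
          have h1 := hneg m hm0 (min_le_right _ _)
          have h2 := hW t (by linarith)
          rw [hx]; linarith) t ht
      simpa using this
    exact rate_unbounded W (fun t => -(δ * X t)) 1 (δ * m) B (mul_pos hδ hm0)
      (fun t ht => dW t (by linarith))
      (fun t ht => by
        have := mul_le_mul_of_nonneg_left (hX t ht) hδ.le
        linarith) (fun t ht => (bd t (by linarith)).2)
  obtain ⟨t₁, ht₁, hWt⟩ := h1
  set m := - W t₁ with hm
  have hm0 : 0 < m := by linarith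
  have hWm : ∀ t, t₁ ≤ t → W t ≤ -m := fun t ht => by have := hanti t₁ ht₁ t ht; linarith
  -- near `x = 0`, `|f x| < m / 2`
  obtain ⟨ρ, hρ, hfρ⟩ := Metric.continuousAt_iff.mp (hf.continuousAt (x := (0 : ℝ))) (m / 2)
    (by linarith)
  have hfs : ∀ x, 0 < x → x < ρ → |f x| < m / 2 := by
    intro x hx hxρ
    have := hfρ (x := x) (by simpa [abs_of_pos hx] using hxρ)
    simpa [f0] using this
  -- `f` bounded on `[-B, B]`
  obtain ⟨C, hC⟩ := (isCompact_Icc (a := -B) (b := B)).exists_bound_of_continuousOn hf.continuousOn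
  set D := |C| + B + 1 with hD
  have hB0 : 0 ≤ B := (abs_nonneg _).trans (bd 0 le_rfl).1
  have hD0 : 0 < D := by positivity
  -- `η`
  set η := δ * ρ / (2 * D) with hη
  have hη0 : 0 < η := by positivity
  have hηD : η * D = δ * ρ / 2 := by rw [hη]; field_simp
  refine rate_unbounded (fun t => W t + η * X t)
    (fun t => -(δ * X t) + η * (W t - f (X t))) t₁ (min (η * (m / 2)) (δ * ρ / 2)) (B + η * B)
    (by positivity) (fun t ht => (dW t (by linarith)).add ((dX t (by linarith)).const_mul η)) ?_ ?_
  · intro t ht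
    have hx := hpos t (by linarith)
    have hw := hWm t ht
    rcases lt_or_ge (X t) ρ with hxρ | hxρ
    · have h1 := (abs_lt.mp (hfs _ hx hxρ)).1
      have h2 : η * (W t - f (X t)) ≤ η * (-(m / 2)) :=
        mul_le_mul_of_nonneg_left (by linarith) hη0.le
      have h3 := mul_pos hδ hx
      have h4 := min_le_left (η * (m / 2)) (δ * ρ / 2)
      linarith
    · have hb := bd t (by linarith)
      have h1 := hC (X t) (abs_le.mp hb.1)
      rw [Real.norm_eq_abs] at h1
      have h2 : η * (W t - f (X t)) ≤ η * D := by
        refine mul_le_mul_of_nonneg_left ?_ hη0.le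
        have := (abs_le.mp hb.2).2
        have := (abs_le.mp h1).1
        have := le_abs_self C
        linarith
      have h3 := mul_le_mul_of_nonneg_left hxρ hδ.le
      have h4 := min_le_right (η * (m / 2)) (δ * ρ / 2)
      linarith
  · intro t ht
    have hb := bd t (by linarith)
    refine (abs_add_le _ _).trans (add_le_add hb.2 ?_)
    rw [abs_mul, abs_of_pos hη0]
    exact mul_le_mul_of_nonneg_left hb.1 hη0.le

lemma half_return {S : Type*} [TopologicalSpace S]
    (f : ℝ → ℝ) (δ ε B : ℝ) (hδ : 0 < δ) (hε : 0 < ε) (hf : Continuous f)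
    (f0 : f 0 = 0) (hneg : ∀ x, 0 < x → x ≤ ε → f x < 0) (X W : S → ℝ → ℝ)
    (cX : Continuous (fun q : S × ℝ => X q.1 q.2)) (cW : Continuous (fun q : S × ℝ => W q.1 q.2))
    (dX : ∀ s t, 0 ≤ t → HasDerivAt (X s) (W s t - f (X s t)) t)
    (dW : ∀ s t, 0 ≤ t → HasDerivAt (W s) (-(δ * X s t)) t)
    (bd : ∀ s t, 0 ≤ t → |X s t| ≤ B ∧ |W s t| ≤ B)
    (hX0 : ∀ s, X s 0 = 0) (hW0 : ∀ s, 0 < W s 0)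
    (hne : ∀ s t, 0 ≤ t → X s t = 0 → W s t ≠ 0) :
    ∃ τ : S → ℝ, Continuous τ ∧ ∀ s, 0 < τ s ∧ X s (τ s) = 0 ∧ W s (τ s) < 0 := by
  have cXs : ∀ s, Continuous (X s) := fun s =>
    cX.comp (Continuous.prodMk continuous_const continuous_id)
  -- positivity just after time zero
  have L1 : ∀ s₀, ∀ᶠ q : S × ℝ in 𝓝 (s₀, 0), 0 < q.2 → 0 < X q.1 q.2 := by
    intro s₀
    have hc : Continuous (fun q : S × ℝ => W q.1 q.2 - f (X q.1 q.2)) := cW.sub (hf.comp cX)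
    have h1 : ∀ᶠ q : S × ℝ in 𝓝 (s₀, 0), 0 < W q.1 q.2 - f (X q.1 q.2) := by
      refine (hc.tendsto (s₀, 0)).eventually (lt_mem_nhds ?_)
      simp [hX0, f0, hW0]
    rw [nhds_prod_eq, eventually_prod_iff] at h1 ⊢
    obtain ⟨pa, ha, pb, hb, hab⟩ := h1
    obtain ⟨σ, hσ, hball⟩ := Metric.eventually_nhds_iff.mp hb
    refine ⟨pa, ha, fun t => t < σ, gt_mem_nhds hσ, ?_⟩
    intro s hs t ht htpos
    simp only at ht htpos ⊢
    have hmono : StrictMonoOn (X s) (Icc 0 t) := by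
      refine strictMonoOn_of_deriv_pos (convex_Icc _ _) (cXs s).continuousOn ?_
      intro u hu
      rw [interior_Icc] at hu
      rw [(dX s u hu.1.le).deriv]
      refine hab hs (hball ?_)
      simp only [dist_zero_right, Real.norm_eq_abs, abs_of_pos hu.1]
      linarith [hu.2]
    have := hmono (left_mem_Icc.mpr htpos.le) (right_mem_Icc.mpr htpos.le) htpos
    rwa [hX0] at this
  have L2 : ∀ s, ∃ τ, 0 < τ ∧ X s τ = 0 ∧ ∀ t, 0 < t → t < τ → 0 < X s t := by
    intro s
    have h1 : ∀ᶠ t in 𝓝 (0 : ℝ), 0 < t → 0 < X s t :=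
      ((Continuous.prodMk continuous_const continuous_id).tendsto (0 : ℝ) :
        Tendsto (fun t : ℝ => (s, t)) (𝓝 0) (𝓝 (s, 0))).eventually (L1 s)
    obtain ⟨σ, hσ, hball⟩ := Metric.eventually_nhds_iff.mp h1
    have hsm : ∀ t, 0 < t → t < σ → 0 < X s t := fun t h0 h1 =>
      hball (by simpa [abs_of_pos h0] using h1) h0
    obtain ⟨t₁, ht₁, hXt₁⟩ := exists_return f δ ε B hδ hε hf f0 hneg (X s) (W s) (dX s) (dW s) (bd s)
    set Z : Set ℝ := Ici σ ∩ (X s) ⁻¹' (Iic 0) with hZ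
    have hZc : IsClosed Z := isClosed_Ici.inter (isClosed_Iic.preimage (cXs s))
    have hZne : Z.Nonempty := ⟨t₁, by
      by_contra h
      exact absurd (hsm t₁ ht₁ (not_le.mp h)) (not_lt.mpr hXt₁), hXt₁⟩
    have hZb : BddBelow Z := ⟨σ, fun t ht => ht.1⟩
    have hmem := hZc.csInf_mem hZne hZb
    set τ := sInf Z
    have hτ0 : 0 < τ := hσ.trans_le hmem.1
    have hpos : ∀ t, 0 < t → t < τ → 0 < X s t := by
      intro t h0 hlt
      by_contra h
      rw [not_lt] at h
      have : t ∈ Z := ⟨by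
        by_contra h'
        exact absurd (hsm t h0 (not_le.mp h')) (not_lt.mpr h), h⟩
      exact absurd (csInf_le hZb this) (not_le.mpr hlt)
    refine ⟨τ, hτ0, le_antisymm hmem.2 ?_, hpos⟩
    have ht : Tendsto (X s) (𝓝[<] τ) (𝓝 (X s τ)) := (cXs s).continuousWithinAt
    refine ge_of_tendsto ht ?_
    filter_upwards [Ioo_mem_nhdsLT hτ0] with t ht
    exact (hpos t ht.1 ht.2).le
  choose τ hτ0 hτX hτpos using L2
  have hW : ∀ s, W s (τ s) < 0 := by
    intro s
    refine lt_of_le_of_ne ?_ (hne s _ (hτ0 s).le (hτX s))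
    have hd := dX s (τ s) (hτ0 s).le
    rw [hτX, f0, sub_zero] at hd
    by_contra h
    rw [not_le] at h
    have h2 : ∀ᶠ t in 𝓝[<] (τ s), X s t < X s (τ s) := by
      have := hd.tendsto_slope.eventually (lt_mem_nhds h)
      have h3 : ∀ᶠ t in 𝓝[<] (τ s), 0 < slope (X s) (τ s) t :=
        this.filter_mono (nhdsWithin_mono _ (fun x hx => ne_of_lt hx))
      filter_upwards [h3, self_mem_nhdsWithin] with t ht1 ht2
      rw [slope_def_field] at ht1
      have h4 : t - τ s < 0 := sub_neg.mpr ht2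
      by_contra h5
      exact absurd (div_nonpos_of_nonneg_of_nonpos (sub_nonneg.mpr (not_lt.mp h5)) h4.le)
        (not_le.mpr ht1)
    obtain ⟨t, ht1, ht2⟩ := (h2.and (Ioo_mem_nhdsLT (hτ0 s))).exists
    have := hτpos s t ht2.1 ht2.2
    rw [hτX] at ht1
    linarith
  refine ⟨τ, ?_, fun s => ⟨hτ0 s, hτX s, hW s⟩⟩
  rw [continuous_iff_continuousAt]
  intro s₀
  rw [ContinuousAt, tendsto_order]
  constructor
  · intro a ha
    have key : ∀ t ∈ Icc 0 a, ∀ᶠ q : S × ℝ in 𝓝 (s₀, t), 0 < q.2 → 0 < X q.1 q.2 := by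
      intro t ht
      rcases eq_or_lt_of_le ht.1 with h | h
      · rw [← h]; exact L1 s₀
      · have := (cX.tendsto (s₀, t)).eventually
          (lt_mem_nhds (hτpos s₀ t h (ht.2.trans_lt ha)))
        filter_upwards [this] with q hq _ using hq
    have := isCompact_Icc.eventually_forall_of_forall_eventually
      (P := fun s t => 0 < t → 0 < X s t) key
    filter_upwards [this] with s hs
    by_contra h
    rw [not_lt] at h
    have := hs (τ s) ⟨(hτ0 s).le, h⟩ (hτ0 s)
    rw [hτX] at this
    exact lt_irrefl _ this
  · intro b hb
    have hd := dX s₀ (τ s₀) (hτ0 s₀).le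
    rw [hτX, f0, sub_zero] at hd
    have h2 : ∀ᶠ t in 𝓝[>] (τ s₀), X s₀ t < 0 := by
      have := hd.tendsto_slope.eventually (gt_mem_nhds (hW s₀))
      have h3 : ∀ᶠ t in 𝓝[>] (τ s₀), slope (X s₀) (τ s₀) t < 0 :=
        this.filter_mono (nhdsWithin_mono _ (fun x hx => ne_of_gt hx))
      filter_upwards [h3, self_mem_nhdsWithin] with t ht1 ht2
      rw [slope_def_field] at ht1
      have h4 : 0 < t - τ s₀ := sub_pos.mpr ht2
      rw [hτX s₀, sub_zero] at ht1
      by_contra h5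
      exact absurd (div_nonneg (not_lt.mp h5) h4.le) (not_le.mpr ht1)
    obtain ⟨t, ht1, ht2⟩ := (h2.and (Ioo_mem_nhdsGT hb)).exists
    have : ∀ᶠ s in 𝓝 s₀, X s t < 0 :=
      ((cX.comp (Continuous.prodMk continuous_id continuous_const)).tendsto s₀).eventually
        (gt_mem_nhds ht1)
    filter_upwards [this] with s hs
    by_contra h
    rw [not_lt] at h
    have h0 : 0 < t := (hτ0 s₀).trans ht2.1
    have := hτpos s t h0 (ht2.2.trans_le h)
    linarith

/-- the shifted nonlinearity -/
noncomputable def stF (A lam x : ℝ) : ℝ :=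
  (lam + x) + A * |1 - (lam + x)| * (lam + x) - (lam + A * |1 - lam| * lam)

lemma stF_continuous (A lam : ℝ) : Continuous (stF A lam) := by
  unfold stF; fun_prop

lemma stF_zero (A lam : ℝ) : stF A lam 0 = 0 := by simp [stF]

lemma stF_left (A lam x : ℝ) (hl : lam < 1) (hx : x ≤ 1 - lam) :
    stF A lam x = -((2 * A * lam - 1 - A) * x) - A * x ^ 2 := by
  unfold stF
  rw [abs_of_nonneg (by linarith : 0 ≤ 1 - (lam + x)), abs_of_pos (by linarith : 0 < 1 - lam)]
  ring

lemma stF_right (A lam x : ℝ) (hl : lam < 1) (hx : 1 - lam ≤ x) :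
    stF A lam x = A * x ^ 2 + (1 - A + 2 * A * lam) * x - 2 * A * lam * (1 - lam) := by
  unfold stF
  rw [abs_of_nonpos (by linarith : 1 - (lam + x) ≤ 0), abs_of_pos (by linarith : 0 < 1 - lam)]
  ring

lemma stF_abs (A lam x : ℝ) (hA : 1 < A) (h0 : 0 < lam) (hl : lam < 1)
    (hk : 0 < 2 * A * lam - 1 - A) : |stF A lam x| ≤ A * |x| ^ 2 + (A + 1) * |x| := by
  have hAl : A * lam < A := by nlinarith
  rcases le_total x (1 - lam) with h | h
  · rw [stF_left A lam x hl h, sq_abs]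
    have h1 : |(2 * A * lam - 1 - A) * x| ≤ (A + 1) * |x| := by
      rw [abs_mul, abs_of_pos hk]
      exact mul_le_mul_of_nonneg_right (by linarith) (abs_nonneg x)
    have h2 := abs_le.mp h1
    have h3 : 0 ≤ A * x ^ 2 := by positivity
    rw [abs_le]; constructor <;> linarith [h2.1, h2.2]
  · have hx : 0 < x := by linarith
    rw [stF_right A lam x hl h, abs_of_pos hx]
    have h3 : 0 ≤ A * x ^ 2 := by positivity
    have h4 : A * lam * (1 - lam) ≤ A * lam * x := mul_le_mul_of_nonneg_left h (by positivity)
    have h5 : 0 ≤ A * lam * (1 - lam) := mul_nonneg (by positivity) (by linarith)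
    have h6 : A * lam * x ≤ A * x := mul_le_mul_of_nonneg_right hAl.le hx.le
    have h7 : 0 < A * x := by positivity
    rw [abs_le]; constructor <;> nlinarith

lemma stF_mul (A lam x : ℝ) (hA : 1 < A) (h0 : 0 < lam) (hl : lam < 1)
    (hk : 0 < 2 * A * lam - 1 - A) : A * |x| ^ 3 - (A + 1) * |x| ^ 2 ≤ x * stF A lam x := by
  have hAl : A * lam < A := by nlinarith
  rcases le_total x (1 - lam) with h | h
  · rw [stF_left A lam x hl h]
    rcases le_total 0 x with hx | hx
    · rw [abs_of_nonneg hx]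
      have : 0 ≤ x ^ 2 * (2 * A * (1 - lam - x) + 2) := by
        have : 0 ≤ A * (1 - lam - x) := mul_nonneg (by linarith) (by linarith)
        have : 0 ≤ 2 * A * (1 - lam - x) + 2 := by linarith
        positivity
      nlinarith
    · rw [abs_of_nonpos hx]
      have : 0 ≤ x ^ 2 * (2 * A + 2 - 2 * A * lam) := mul_nonneg (sq_nonneg x) (by linarith)
      nlinarith
  · have hx : 0 < x := by linarith
    rw [stF_right A lam x hl h, abs_of_pos hx]
    have h4 : A * lam * (1 - lam) ≤ A * lam * x := mul_le_mul_of_nonneg_left h (by positivity)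
    have h5 : 0 ≤ x * (A * lam * x - A * lam * (1 - lam)) := mul_nonneg hx.le (by linarith)
    nlinarith [sq_nonneg x]

lemma stF_lip (A lam R : ℝ) (hA : 1 < A) (h0 : 0 < lam) (hl : lam < 1) (x x' : ℝ)
    (hx : |x| ≤ R) (hx' : |x'| ≤ R) :
    |stF A lam x - stF A lam x'| ≤ (1 + A * (3 + 2 * R)) * |x - x'| := by
  have e : stF A lam x - stF A lam x' = (x - x') + A * (|1 - (lam + x)| * (x - x') +
      (|1 - (lam + x)| - |1 - (lam + x')|) * (lam + x')) := by unfold stF; ring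
  have hd : |(|1 - (lam + x)| - |1 - (lam + x')|)| ≤ |x - x'| := by
    refine (abs_abs_sub_abs_le_abs_sub _ _).trans (le_of_eq ?_)
    rw [← abs_neg]; congr 1; ring
  have hx1 := abs_le.mp hx
  have hx2 := abs_le.mp hx'
  have h1 : |1 - (lam + x)| ≤ 2 + R := by rw [abs_le]; constructor <;> linarith [hx1.1, hx1.2]
  have h2 : |lam + x'| ≤ 1 + R := by rw [abs_le]; constructor <;> linarith [hx2.1, hx2.2]
  have h3 : |(|1 - (lam + x)| * (x - x') +
      (|1 - (lam + x)| - |1 - (lam + x')|) * (lam + x'))| ≤ (2 + R) * |x - x'| +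
      |x - x'| * (1 + R) := by
    refine (abs_add_le _ _).trans ?_
    rw [abs_mul, abs_mul, abs_abs]
    gcongr
  rw [e]
  refine (abs_add_le _ _).trans ?_
  rw [abs_mul, abs_of_pos (by linarith : 0 < A)]
  have := mul_le_mul_of_nonneg_left h3 (by linarith : 0 ≤ A)
  nlinarith

/-- outer Lyapunov function -/
noncomputable def outV (δ x w : ℝ) : ℝ := δ * x ^ 2 / 2 + w ^ 2 / 2 - Real.arctan x * w

/-- derivative of the outer Lyapunov function, as a function of position and velocity -/
noncomputable def outD (δ x w p q : ℝ) : ℝ :=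
  δ * x * p + w * q - (1 / (1 + x ^ 2) * p * w + Real.arctan x * q)

lemma outV_deriv (δ : ℝ) (X W : ℝ → ℝ) (p q t : ℝ) (hX : HasDerivAt X p t)
    (hW : HasDerivAt W q t) :
    HasDerivAt (fun t => outV δ (X t) (W t)) (outD δ (X t) (W t) p q) t := by
  unfold outV outD
  have h := ((((hX.pow 2).const_mul δ).div_const 2).add ((hW.pow 2).div_const 2)).sub
    ((hX.arctan).mul hW)
  refine h.congr_deriv ?_
  push_cast
  ring

lemma abs_arctan_le_two (x : ℝ) : |Real.arctan x| ≤ 2 := by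
  have h1 := Real.arctan_lt_pi_div_two x
  have h2 := Real.neg_pi_div_two_lt_arctan x
  have := Real.pi_lt_four
  rw [abs_le]; constructor <;> linarith

lemma outV_coercive (δ c : ℝ) (hδ : 0 < δ) :
    ∃ R, 0 < R ∧ ∀ x w, outV δ x w ≤ c → |x| ≤ R ∧ |w| ≤ R := by
  refine ⟨1 + 2 * (|c| + 4) / δ + 4 * (|c| + 4), by positivity, fun x w h => ?_⟩
  have h1 : Real.arctan x * w ≤ 2 * |w| := by
    refine (le_abs_self _).trans ?_
    rw [abs_mul]
    exact mul_le_mul_of_nonneg_right (abs_arctan_le_two x) (abs_nonneg w)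
  have h2 : δ * x ^ 2 / 2 + w ^ 2 / 4 ≤ |c| + 4 := by
    unfold outV at h
    have := le_abs_self c
    nlinarith [sq_nonneg (|w| / 2 - 2), sq_abs w]
  have hc := abs_nonneg c
  have hq : 0 < 2 * (|c| + 4) / δ := by positivity
  constructor
  · have h3 : x ^ 2 ≤ 2 * (|c| + 4) / δ := by
      rw [le_div_iff₀ hδ]; nlinarith [sq_nonneg w]
    nlinarith [sq_nonneg (|x| - 1), sq_abs x]
  · have h3 : w ^ 2 ≤ 4 * (|c| + 4) := by nlinarith [mul_nonneg hδ.le (sq_nonneg x)]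
    nlinarith [sq_nonneg (|w| - 1), sq_abs w]

lemma cubic_bound (a b c d : ℝ) (ha : 0 < a) (hb : 0 ≤ b) (hc : 0 ≤ c) (hd : 0 ≤ d) :
    ∃ X M, 0 < X ∧ 0 ≤ M ∧ (∀ r, X ≤ r → -a * r ^ 3 + b * r ^ 2 + c * r + d < 0) ∧
      (∀ r, 0 ≤ r → r ≤ X → -a * r ^ 3 + b * r ^ 2 + c * r + d ≤ M) := by
  set X := 1 + (b + c + d + 1) / a with hX
  have hX1 : 1 ≤ X := by
    have : 0 ≤ (b + c + d + 1) / a := by positivity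
    linarith
  refine ⟨X, b * X ^ 2 + c * X + d, by linarith, by positivity, ?_, ?_⟩
  · intro r hr
    have h1 : b + c + d < a * r := by
      have : a * X = a + (b + c + d + 1) := by rw [hX]; field_simp
      nlinarith
    have hr1 : 1 ≤ r := hX1.trans hr
    have h2 : r ≤ r ^ 2 := by nlinarith
    have h3 : 1 ≤ r ^ 2 := by nlinarith
    have h4 := mul_le_mul_of_nonneg_left h2 hc
    have h5 := mul_le_mul_of_nonneg_left h3 hd
    have h6 : (b + c + d) * r ^ 2 < a * r * r ^ 2 := mul_lt_mul_of_pos_right h1 (by positivity)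
    nlinarith
  · intro r h0 hr
    have : 0 ≤ a * r ^ 3 := by positivity
    have : b * r ^ 2 ≤ b * X ^ 2 := by gcongr
    have : c * r ≤ c * X := by gcongr
    linarith

lemma outer (A δ lam : ℝ) (hA : 1 < A) (hδ : 0 < δ) (h0 : 0 < lam) (hl : lam < 1)
    (hk : 0 < 2 * A * lam - 1 - A) :
    ∃ c₀, ∀ x w, c₀ < outV δ x w →
      outD δ x w (w - stF A lam x) (-(δ * x)) < 0 := by
  obtain ⟨X, M, hX, hM, hneg, hMb⟩ := cubic_bound (δ * A) (δ * (A + 1) + A ^ 2 / 2)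
    (A * (A + 1) + 2 * δ) ((A + 1) ^ 2 / 2) (by positivity) (by positivity) (by positivity)
    (by positivity)
  -- main estimate
  have key : ∀ x w, outD δ x w (w - stF A lam x) (-(δ * x)) ≤
      (-(δ * A) * |x| ^ 3 + (δ * (A + 1) + A ^ 2 / 2) * |x| ^ 2 + (A * (A + 1) + 2 * δ) * |x| +
        (A + 1) ^ 2 / 2) - w ^ 2 / (2 * (1 + x ^ 2)) := by
    intro x w
    set f := stF A lam x with hf
    have hq : 0 < 1 + x ^ 2 := by positivity
    have e : outD δ x w (w - f) (-(δ * x)) = - (δ * (x * f)) + δ * (Real.arctan x * x) +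
        f ^ 2 / (2 * (1 + x ^ 2)) - w ^ 2 / (2 * (1 + x ^ 2)) - (w - f) ^ 2 / (2 * (1 + x ^ 2)) := by
      unfold outD; field_simp; ring
    have h1 : 0 ≤ (w - f) ^ 2 / (2 * (1 + x ^ 2)) := by positivity
    have h2 := mul_le_mul_of_nonneg_left (stF_mul A lam x hA h0 hl hk) hδ.le
    have h3 : δ * (Real.arctan x * x) ≤ δ * (2 * |x|) := by
      refine mul_le_mul_of_nonneg_left ?_ hδ.le
      refine (le_abs_self _).trans ?_
      rw [abs_mul]
      exact mul_le_mul_of_nonneg_right (abs_arctan_le_two x) (abs_nonneg x)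
    have h4 : f ^ 2 / (2 * (1 + x ^ 2)) ≤ (A * |x| + (A + 1)) ^ 2 / 2 := by
      rw [div_le_iff₀ (by positivity)]
      have h5 := stF_abs A lam x hA h0 hl hk
      have h6 : f ^ 2 ≤ (A * |x| ^ 2 + (A + 1) * |x|) ^ 2 := by
        rw [← sq_abs f]; gcongr
      have h7 : (A * |x| ^ 2 + (A + 1) * |x|) ^ 2 = (A * |x| + (A + 1)) ^ 2 * x ^ 2 := by
        rw [← sq_abs x]; ring
      nlinarith [sq_nonneg (A * |x| + (A + 1))]
    rw [e]
    nlinarith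
  refine ⟨δ * X ^ 2 / 2 + (2 * M * (1 + X ^ 2)) / 2 + 2 * (1 + 2 * M * (1 + X ^ 2)), fun x w h => ?_⟩
  refine (key x w).trans_lt ?_
  have hq : 0 < 1 + x ^ 2 := by positivity
  have hwq : 0 ≤ w ^ 2 / (2 * (1 + x ^ 2)) := by positivity
  rcases le_or_gt X |x| with hx | hx
  · linarith [hneg _ hx]
  · have h1 := hMb _ (abs_nonneg x) hx.le
    have hx2 : x ^ 2 ≤ X ^ 2 := by
      rw [← sq_abs x]; exact pow_le_pow_left₀ (abs_nonneg x) hx.le 2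
    suffices M < w ^ 2 / (2 * (1 + x ^ 2)) by linarith
    rw [lt_div_iff₀ (by positivity)]
    have h2 : 2 * M * (1 + X ^ 2) < w ^ 2 := by
      by_contra hcon
      rw [not_lt] at hcon
      set W2 := 2 * M * (1 + X ^ 2)
      have h3 : -(Real.arctan x * w) ≤ 2 * |w| := by
        refine (neg_le_abs _).trans ?_
        rw [abs_mul]
        exact mul_le_mul_of_nonneg_right (abs_arctan_le_two x) (abs_nonneg w)
      have h4 : |w| ≤ 1 + W2 := by nlinarith [sq_nonneg (|w| - 1), sq_abs w]
      unfold outV at h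
      nlinarith
    have h3 : M * (2 * (1 + x ^ 2)) ≤ 2 * M * (1 + X ^ 2) := by nlinarith
    linarith

/-- inner Lyapunov function -/
noncomputable def inV (δ η x w : ℝ) : ℝ := δ * x ^ 2 / 2 + w ^ 2 / 2 + η * (x * w)

noncomputable def inD (δ η x w p q : ℝ) : ℝ := δ * x * p + w * q + η * (p * w + x * q)

lemma inV_deriv (δ η : ℝ) (X W : ℝ → ℝ) (p q t : ℝ) (hX : HasDerivAt X p t)
    (hW : HasDerivAt W q t) :
    HasDerivAt (fun t => inV δ η (X t) (W t)) (inD δ η (X t) (W t) p q) t := by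
  unfold inV inD
  have h := ((((hX.pow 2).const_mul δ).div_const 2).add ((hW.pow 2).div_const 2)).add
    ((hX.mul hW).const_mul η)
  refine h.congr_deriv ?_
  push_cast
  ring

lemma inner_est (A δ lam : ℝ) (hA : 1 < A) (hδ : 0 < δ) (hl : lam < 1)
    (hk : 0 < 2 * A * lam - 1 - A) :
    ∃ η a, 0 < a ∧ ∀ x w, inV δ η x w = a ^ 2 / 2 →
      0 < inD δ η x w (w - stF A lam x) (-(δ * x)) := by
  set k := 2 * A * lam - 1 - A with hkdef
  obtain ⟨η, hη0, hη1, hη2⟩ : ∃ η, 0 < η ∧ η * (δ + A + k ^ 2 / 2) ≤ δ * k / 4 ∧ η ^ 2 ≤ δ / 4 := by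
    have hD : 0 < δ + A + k ^ 2 / 2 := by positivity
    have h1 : 0 < δ * k / 4 / (δ + A + k ^ 2 / 2) := by positivity
    refine ⟨min (δ * k / 4 / (δ + A + k ^ 2 / 2)) (Real.sqrt (δ / 4)), by positivity, ?_, ?_⟩
    · rw [← le_div_iff₀ hD]; exact min_le_left _ _
    · calc _ ≤ (Real.sqrt (δ / 4)) ^ 2 :=
            pow_le_pow_left₀ (by positivity) (min_le_right _ _) 2
        _ = δ / 4 := Real.sq_sqrt (by positivity)
  obtain ⟨ρ, hρ0, hρ1, hρ2⟩ : ∃ ρ, 0 < ρ ∧ A * ρ ≤ k / 4 ∧ ρ ≤ 1 - lam := by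
    refine ⟨min (k / 4 / A) (1 - lam), lt_min (by positivity) (by linarith), ?_, min_le_right _ _⟩
    rw [mul_comm, ← le_div_iff₀ (by linarith)]; exact min_le_left _ _
  obtain ⟨a, ha0, ha1, ha2⟩ : ∃ a, 0 < a ∧ a ^ 2 / 2 ≤ 1 / 4 ∧ a ^ 2 / 2 ≤ δ * ρ ^ 2 / 4 := by
    refine ⟨min (1 / 2) (Real.sqrt (δ * ρ ^ 2 / 4)), by positivity, ?_, ?_⟩
    · have := pow_le_pow_left₀ (by positivity) (min_le_left (1 / 2) (Real.sqrt (δ * ρ ^ 2 / 4))) 2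
      linarith
    · have := pow_le_pow_left₀ (by positivity) (min_le_right (1 / 2) (Real.sqrt (δ * ρ ^ 2 / 4))) 2
      rw [Real.sq_sqrt (by positivity)] at this
      have : 0 < δ * ρ ^ 2 / 4 := by positivity
      linarith
  refine ⟨η, a, ha0, fun x w h => ?_⟩
  have hlow : δ * x ^ 2 / 4 + w ^ 2 / 4 ≤ a ^ 2 / 2 := by
    rw [← h]; unfold inV
    nlinarith [sq_nonneg (w / 2 + η * x), mul_le_mul_of_nonneg_right hη2 (sq_nonneg x)]
  have hxw : 0 < x ^ 2 ∨ 0 < w ^ 2 := by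
    by_contra hcon
    rw [not_or, not_lt, not_lt] at hcon
    have hx : x = 0 := pow_eq_zero_iff (two_ne_zero) |>.mp (le_antisymm hcon.1 (sq_nonneg x))
    have hw : w = 0 := pow_eq_zero_iff (two_ne_zero) |>.mp (le_antisymm hcon.2 (sq_nonneg w))
    rw [hx, hw] at h
    have h9 : 0 < a ^ 2 / 2 := by positivity
    simp only [inV] at h
    linarith
  have hx : |x| ≤ ρ := by
    refine abs_le_of_sq_le_sq ?_ hρ0.le
    have : δ * x ^ 2 ≤ δ * ρ ^ 2 := by nlinarith [sq_nonneg w]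
    exact le_of_mul_le_mul_left this hδ
  have hw : |w| ≤ 1 := by
    refine abs_le_of_sq_le_sq ?_ zero_le_one
    nlinarith [mul_nonneg hδ.le (sq_nonneg x)]
  have hx' := abs_le.mp hx
  have hw' := abs_le.mp hw
  rw [stF_left A lam x hl (by linarith [hx'.2])]
  have e : inD δ η x w (w - (-((2 * A * lam - 1 - A) * x) - A * x ^ 2)) (-(δ * x)) =
      x ^ 2 * (δ * k + δ * (A * x) - η * δ + η * A * w - η * k ^ 2 / 2) + η * w ^ 2 / 2 +
        η * (w + k * x) ^ 2 / 2 := by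
    unfold inD; rw [← hkdef]; ring
  rw [e]
  have h1 : -(k / 4) ≤ A * x := by nlinarith [hx'.1]
  have h2 : -(η * A) ≤ η * A * w := by
    have := mul_le_mul_of_nonneg_left hw'.1 (by positivity : 0 ≤ η * A)
    linarith
  have h3 : δ * k / 2 ≤ δ * k + δ * (A * x) - η * δ + η * A * w - η * k ^ 2 / 2 := by
    have := mul_le_mul_of_nonneg_left h1 hδ.le
    nlinarith
  have h4 := mul_le_mul_of_nonneg_left h3 (sq_nonneg x)
  have h5 : 0 ≤ η * (w + k * x) ^ 2 / 2 := by positivity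
  have h6 : 0 ≤ x ^ 2 * (δ * k / 2) := by positivity
  have h7 : 0 ≤ η * w ^ 2 / 2 := by positivity
  rcases hxw with hp | hp
  · have : 0 < x ^ 2 * (δ * k / 2) := by positivity
    linarith
  · have : 0 < η * w ^ 2 / 2 := by positivity
    linarith

lemma clamp_lip (R x x' : ℝ) :
    |max (-R) (min R x) - max (-R) (min R x')| ≤ |x - x'| := by
  have h1 := abs_max_sub_max_le_max (-R) (min R x) (-R) (min R x')
  have h2 := abs_min_sub_min_le_max R x R x'
  simp only [sub_self, abs_zero] at h1 h2
  exact h1.trans (max_le (abs_nonneg _) (h2.trans (max_le (abs_nonneg _) le_rfl)))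

lemma clamp_abs (R x : ℝ) (hR : 0 < R) : |max (-R) (min R x)| ≤ R := by
  rw [abs_le]
  exact ⟨le_max_left _ _, max_le (by linarith) (min_le_left _ _)⟩

lemma clamp_id (R x : ℝ) (h : |x| ≤ R) : max (-R) (min R x) = x := by
  rw [abs_le] at h
  rw [min_eq_right h.2, max_eq_right h.1]

/-- truncated vector field -/
noncomputable def truncField (A δ lam R : ℝ) (p : ℝ × ℝ) : ℝ × ℝ :=
  (max (-R) (min R p.2) - stF A lam (max (-R) (min R p.1)), -(δ * max (-R) (min R p.1)))

lemma trunc_lip (A δ lam R : ℝ) (hA : 1 < A) (hδ : 0 < δ) (h0 : 0 < lam) (hl : lam < 1)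
    (hR : 0 < R) : LipschitzWith (Real.toNNReal (2 + A * (3 + 2 * R) + δ))
      (truncField A δ lam R) := by
  refine LipschitzWith.of_dist_le_mul fun p q => ?_
  have hC : 0 ≤ 2 + A * (3 + 2 * R) + δ := by positivity
  rw [Real.coe_toNNReal _ hC]
  have hd1 : |p.1 - q.1| ≤ dist p q := by rw [Prod.dist_eq]; exact le_max_left _ _
  have hd2 : |p.2 - q.2| ≤ dist p q := by rw [Prod.dist_eq]; exact le_max_right _ _
  have hd0 : 0 ≤ dist p q := dist_nonneg
  have c1 := (clamp_lip R p.1 q.1).trans hd1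
  have c2 := (clamp_lip R p.2 q.2).trans hd2
  have h1 := stF_lip A lam R hA h0 hl _ _ (clamp_abs R p.1 hR) (clamp_abs R q.1 hR)
  have h2 := mul_le_mul_of_nonneg_left c1 (by positivity : 0 ≤ 1 + A * (3 + 2 * R))
  have h3 := mul_le_mul_of_nonneg_left c1 hδ.le
  have h4 : 0 ≤ δ * dist p q := by positivity
  have h5 : 0 ≤ (1 + A * (3 + 2 * R)) * dist p q := by positivity
  rw [Prod.dist_eq (x := truncField A δ lam R p)]
  refine max_le ?_ ?_
  · rw [Real.dist_eq]
    simp only [truncField]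
    have e : ∀ a b c d : ℝ, a - b - (c - d) = (a - c) + -(b - d) := fun a b c d => by ring
    rw [e]
    refine (abs_add_le _ _).trans ?_
    rw [abs_neg]
    linarith
  · rw [Real.dist_eq]
    simp only [truncField]
    have e : ∀ a b : ℝ, -(δ * a) - -(δ * b) = -(δ * (a - b)) := fun a b => by ring
    rw [e, abs_neg, abs_mul, abs_of_pos hδ]
    linarith

lemma trunc_bdd (A δ lam R : ℝ) (hδ : 0 < δ) (hR : 0 < R) :
    ∃ L : ℝ≥0, ∀ p, ‖truncField A δ lam R p‖ ≤ L := by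
  obtain ⟨C, hC⟩ := (isCompact_Icc (a := -R) (b := R)).exists_bound_of_continuousOn
    (stF_continuous A lam).continuousOn
  refine ⟨Real.toNNReal (R + |C| + δ * R), fun p => ?_⟩
  rw [Real.coe_toNNReal _ (by positivity), Prod.norm_def]
  have c1 := clamp_abs R p.1 hR
  have c2 := clamp_abs R p.2 hR
  have h1 := hC _ (abs_le.mp c1)
  have h3 := mul_le_mul_of_nonneg_left c1 hδ.le
  have h4 := abs_nonneg C
  have h5 := le_abs_self C
  have h6 : 0 < δ * R := by positivity
  rw [Real.norm_eq_abs] at h1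
  refine max_le ?_ ?_
  · rw [Real.norm_eq_abs]
    simp only [truncField]
    refine (abs_sub _ _).trans ?_
    linarith
  · rw [Real.norm_eq_abs]
    simp only [truncField]
    rw [abs_neg, abs_mul, abs_of_pos hδ]
    linarith

lemma shifted_periodic (A δ lam : ℝ) (hA : 1 < A) (hδ : 0 < δ) (h0 : 0 < lam) (hl : lam < 1)
    (hk : 0 < 2 * A * lam - 1 - A) :
    ∃ T : ℝ, 0 < T ∧ ∃ X W : ℝ → ℝ,
      (∀ t, HasDerivAt X (W t - stF A lam (X t)) t) ∧
      (∀ t, HasDerivAt W (-(δ * X t)) t) ∧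
      (∀ t, X (t + T) = X t) ∧ (∀ t, W (t + T) = W t) ∧ ∃ t₁ t₂, W t₁ ≠ W t₂ := by
  obtain ⟨c₀, hout⟩ := outer A δ lam hA hδ h0 hl hk
  obtain ⟨η, a, ha, hin⟩ := inner_est A δ lam hA hδ hl hk
  set b := a + |c₀| + 2 with hb
  have hab : a ≤ b := by have := abs_nonneg c₀; linarith
  have hbc : c₀ < b ^ 2 / 2 := by
    have := abs_nonneg c₀
    have := le_abs_self c₀
    nlinarith
  obtain ⟨R, hR, hbox⟩ := outV_coercive δ (b ^ 2 / 2) hδ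
  obtain ⟨L, hL⟩ := trunc_bdd A δ lam R hδ hR
  obtain ⟨φ, φ0, φd, φc, φper⟩ := flow_exists (truncField A δ lam R) _ L
    (trunc_lip A δ lam R hA hδ h0 hl hR) hL
  -- components
  have d1 : ∀ p t, HasDerivAt (fun t => (φ p t).1) (truncField A δ lam R (φ p t)).1 t :=
    fun p t => (φd p t).fst
  have d2 : ∀ p t, HasDerivAt (fun t => (φ p t).2) (truncField A δ lam R (φ p t)).2 t :=
    fun p t => (φd p t).snd
  have tr : ∀ p : ℝ × ℝ, |p.1| ≤ R → |p.2| ≤ R →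
      (truncField A δ lam R p).1 = p.2 - stF A lam p.1 ∧
      (truncField A δ lam R p).2 = -(δ * p.1) := by
    intro p h1 h2
    simp only [truncField, clamp_id R _ h1, clamp_id R _ h2, and_self]
  let S := Icc a b
  let X : S → ℝ → ℝ := fun s t => (φ (0, (s : ℝ)) t).1
  let W : S → ℝ → ℝ := fun s t => (φ (0, (s : ℝ)) t).2
  have hX0 : ∀ s, X s 0 = 0 := fun s => by simp [X, φ0]
  have hW0 : ∀ s : S, W s 0 = s := fun s => by simp [W, φ0]
  have spos : ∀ s : S, (0 : ℝ) < s := fun s => ha.trans_le s.2.1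
  have V1 : ∀ s t, 0 ≤ t → outV δ (X s t) (W s t) ≤ b ^ 2 / 2 := by
    intro s
    refine barrier (fun t => outV δ (X s t) (W s t)) _ 0 (b ^ 2 / 2)
      (fun t _ => outV_deriv δ (X s) (W s) _ _ t (d1 _ t) (d2 _ t)) ?_ ?_
    · rw [hX0, hW0]
      have := pow_le_pow_left₀ (spos s).le s.2.2 2
      simp [outV]; linarith
    · intro t _ h
      obtain ⟨h1, h2⟩ := hbox _ _ h.le
      obtain ⟨e1, e2⟩ := tr (φ (0, (s : ℝ)) t) h1 h2
      rw [e1, e2]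
      exact hout _ _ (hbc.trans_eq h.symm)
  have bd : ∀ s t, 0 ≤ t → |X s t| ≤ R ∧ |W s t| ≤ R := fun s t ht => hbox _ _ (V1 s t ht)
  have dX : ∀ s t, 0 ≤ t → HasDerivAt (X s) (W s t - stF A lam (X s t)) t := by
    intro s t ht
    have h := d1 (0, (s : ℝ)) t
    rwa [(tr (φ (0, (s : ℝ)) t) (bd s t ht).1 (bd s t ht).2).1] at h
  have dW : ∀ s t, 0 ≤ t → HasDerivAt (W s) (-(δ * X s t)) t := by
    intro s t ht
    have h := d2 (0, (s : ℝ)) t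
    rwa [(tr (φ (0, (s : ℝ)) t) (bd s t ht).1 (bd s t ht).2).2] at h
  have V2 : ∀ s t, 0 ≤ t → a ^ 2 / 2 ≤ inV δ η (X s t) (W s t) := by
    intro s t ht
    have := barrier (fun t => - inV δ η (X s t) (W s t)) _ 0 (-(a ^ 2 / 2))
      (fun t ht => (inV_deriv δ η (X s) (W s) _ _ t (dX s t ht) (dW s t ht)).neg)
      (by
        simp only [hX0, hW0]
        have := pow_le_pow_left₀ ha.le s.2.1 2
        simp [inV]; linarith)
      (fun t ht h => by
        have := hin (X s t) (W s t) (neg_injective h)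
        linarith) t ht
    linarith
  have hne : ∀ s t, 0 ≤ t → X s t = 0 → W s t ≠ 0 := by
    intro s t ht hx hw
    have := V2 s t ht
    rw [hx, hw] at this
    have h9 : 0 < a ^ 2 / 2 := by positivity
    simp [inV] at this
    linarith
  have cφ : Continuous (fun q : S × ℝ => φ (0, (q.1 : ℝ)) q.2) :=
    φc.comp (Continuous.prodMk (by fun_prop) (by fun_prop))
  have cX : Continuous (fun q : S × ℝ => X q.1 q.2) := continuous_fst.comp cφ
  have cW : Continuous (fun q : S × ℝ => W q.1 q.2) := continuous_snd.comp cφ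
  set k := 2 * A * lam - 1 - A with hkdef
  -- sign of the nonlinearity near zero
  obtain ⟨ε, hε, hε1, hε2⟩ : ∃ ε, 0 < ε ∧ ε ≤ 1 - lam ∧ A * ε < k := by
    refine ⟨min (1 - lam) (k / A / 2), lt_min (by linarith) (by positivity), min_le_left _ _, ?_⟩
    have h1 : min (1 - lam) (k / A / 2) ≤ k / A / 2 := min_le_right _ _
    have h2 := mul_le_mul_of_nonneg_left h1 (by linarith : 0 ≤ A)
    have h3 : A * (k / A / 2) = k / 2 := by field_simp
    linarith
  have hneg1 : ∀ x, 0 < x → x ≤ ε → stF A lam x < 0 := by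
    intro x hx hxe
    rw [stF_left A lam x hl (by linarith), ← hkdef]
    have : 0 < k * x := by positivity
    have : 0 ≤ A * x ^ 2 := by positivity
    linarith
  have hneg2 : ∀ x, 0 < x → x ≤ ε → -stF A lam (-x) < 0 := by
    intro x hx hxe
    rw [stF_left A lam (-x) hl (by linarith), ← hkdef]
    have h1 : A * x < k := by nlinarith
    nlinarith
  obtain ⟨τ, τc, hτ⟩ := half_return (stF A lam) δ ε R hδ hε (stF_continuous A lam)
    (stF_zero A lam) hneg1 X W cX cW dX dW bd hX0 (fun s => by rw [hW0]; exact spos s) hne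
  have cshift : Continuous (fun q : S × ℝ => ((q.1, τ q.1 + q.2) : S × ℝ)) := by fun_prop
  obtain ⟨σ, σc, hσ⟩ := half_return (fun x => -stF A lam (-x)) δ ε R hδ hε
    ((stF_continuous A lam).comp continuous_neg).neg (by simp [stF_zero]) hneg2
    (fun s t => -X s (τ s + t)) (fun s t => -W s (τ s + t))
    (cX.comp cshift).neg (cW.comp cshift).neg
    (fun s t ht => by
      have h := ((dX s (τ s + t) (by linarith [(hτ s).1])).comp_const_add (τ s) t).neg
      refine h.congr_deriv ?_
      simp only [neg_neg]; ring)
    (fun s t ht => by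
      have h := ((dW s (τ s + t) (by linarith [(hτ s).1])).comp_const_add (τ s) t).neg
      refine h.congr_deriv ?_
      ring)
    (fun s t ht => by
      have := bd s (τ s + t) (by linarith [(hτ s).1])
      simpa only [abs_neg] using this)
    (fun s => by simp [(hτ s).2.1])
    (fun s => by simpa using (hτ s).2.2)
    (fun s t ht hx => by
      have := hne s (τ s + t) (by linarith [(hτ s).1]) (by simpa using hx)
      simpa using this)
  -- the return map
  have cP : Continuous (fun s : S => W s (τ s + σ s)) :=
    cW.comp (Continuous.prodMk continuous_id (τc.add σc))
  have hTpos : ∀ s, 0 < τ s + σ s := fun s => add_pos (hτ s).1 (hσ s).1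
  have hPX : ∀ s, X s (τ s + σ s) = 0 := fun s => by simpa using (hσ s).2.1
  have hPW : ∀ s, 0 < W s (τ s + σ s) := fun s => by simpa using (hσ s).2.2
  have : PreconnectedSpace S := Subtype.preconnectedSpace isPreconnected_Icc
  let sa : S := ⟨a, left_mem_Icc.mpr hab⟩
  let sb : S := ⟨b, right_mem_Icc.mpr hab⟩
  have ineqa : (sa : ℝ) ≤ W sa (τ sa + σ sa) := by
    have := V2 sa _ (hTpos sa).le
    rw [hPX] at this
    simp only [inV] at this
    exact le_of_sq_le_sq (by simp only [sa]; linarith) (hPW sa).le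
  have ineqb : W sb (τ sb + σ sb) ≤ (sb : ℝ) := by
    have := V1 sb _ (hTpos sb).le
    rw [hPX] at this
    simp only [outV, Real.arctan_zero] at this
    exact le_of_sq_le_sq (by simp only [sb]; linarith) (spos sb).le
  obtain ⟨s, hs⟩ := intermediate_value_univ₂ continuous_subtype_val cP ineqa ineqb
  set T := τ s + σ s with hTdef
  have hT : 0 < T := hTpos s
  have hφT : φ (0, (s : ℝ)) T = (0, (s : ℝ)) := Prod.ext (hPX s) hs.symm
  have hper := φper _ T hφT
  have perX : ∀ t, X s (t + T) = X s t := fun t => congrArg Prod.fst (hper t)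
  have perW : ∀ t, W s (t + T) = W s t := fun t => congrArg Prod.snd (hper t)
  have hbd : ∀ t, |X s t| ≤ R ∧ |W s t| ≤ R := by
    intro t
    obtain ⟨n, hn⟩ := exists_nat_gt (-t / T)
    rw [div_lt_iff₀ hT] at hn
    have h1 : X s (t + n * T) = X s t := Function.Periodic.nat_mul (f := X s) (c := T) perX n t
    have h2 : W s (t + n * T) = W s t := Function.Periodic.nat_mul (f := W s) (c := T) perW n t
    rw [← h1, ← h2]
    exact bd s _ (by linarith)
  refine ⟨T, hT, X s, W s, ?_, ?_, perX, perW, 0, τ s, ?_⟩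
  · intro t
    have h := d1 (0, (s : ℝ)) t
    rwa [(tr (φ (0, (s : ℝ)) t) (hbd t).1 (hbd t).2).1] at h
  · intro t
    have h := d2 (0, (s : ℝ)) t
    rwa [(tr (φ (0, (s : ℝ)) t) (hbd t).1 (hbd t).2).2] at h
  · rw [hW0]
    exact ne_of_gt ((hτ s).2.2.trans (spos s))

/-- For `A > 1`, `δ₀ > 0`, and `(1+A)/(2A) < λ < 1`, the slow Stommel system
`ẏ = μ - y - A|1-y|y`, `μ̇ = δ₀(λ - y)` admits a nonconstant periodic solution. -/
theorem stommel_periodic_orbit_exists (A δ₀ lam : ℝ)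
    (hA : 1 < A) (hδ : 0 < δ₀)
    (hlam1 : (1 + A) / (2 * A) < lam) (hlam2 : lam < 1) :
    ∃ T : ℝ, 0 < T ∧ ∃ γ : ℝ → ℝ × ℝ,
      (∀ t : ℝ, HasDerivAt γ
        (((γ t).2 - (γ t).1 - A * |1 - (γ t).1| * (γ t).1,
          δ₀ * (lam - (γ t).1))) t) ∧
      (∀ t : ℝ, γ (t + T) = γ t) ∧
      (∃ t₁ t₂ : ℝ, γ t₁ ≠ γ t₂) := by
  have hA0 : 0 < A := by linarith
  have h0 : 0 < lam := lt_trans (by positivity) hlam1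
  have hk : 0 < 2 * A * lam - 1 - A := by
    rw [div_lt_iff₀ (by positivity)] at hlam1
    linarith
  obtain ⟨T, hT, X, W, dX, dW, pX, pW, t₁, t₂, hne⟩ :=
    shifted_periodic A δ₀ lam hA hδ h0 hlam2 hk
  refine ⟨T, hT, fun t => (lam + X t, (lam + A * |1 - lam| * lam) + W t), ?_, ?_, t₁, t₂, ?_⟩
  · intro t
    refine (((dX t).const_add lam).prodMk
      ((dW t).const_add (lam + A * |1 - lam| * lam))).congr_deriv ?_
    refine Prod.ext ?_ ?_
    · simp only [stF]; ring
    · simp only; ring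
  · intro t
    simp only [pX, pW]
  · intro h
    exact hne (add_left_cancel (congrArg Prod.snd h))
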